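/- For all real numbers α > 0, β > 0 and every real number m, the modified extension of the classical beta function satisfies the functional relation B(α, β+1; m) + B(α+1, β; m) = B(α, β; m). -/

import Mathlib

/-!
On `(0, 1)` the integrand of `B(α, β + 1; m)` is `1 - t` times that of `B(α, β; m)`, and the
integrand of `B(α + 1, β; m)` is `t` times it; the relation is the integral of `(1 - t) + t = 1`
against the integrand of `B(α, β; m)`. Since the factor `exp (m t (1 - t))` is continuous on
`[0, 1]`, this last integrand is integrable because the classical beta integrand is.
-/

open MeasureTheory Real

/-- The modified extension of the classical beta function (MECBF). -/
noncomputable def mecbf (α β m : ℝ) : ℝ :=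
  ∫ t in (0:ℝ)..1, t ^ (α - 1) * (1 - t) ^ (β - 1) * Real.exp (m * t * (1 - t))

section WeightedBeta

variable {α β : ℝ}

lemma intervalIntegrable_rpow_mul_one_sub_rpow (hα : 0 < α) (hβ : 0 < β) :
    IntervalIntegrable (fun t : ℝ ↦ t ^ (α - 1) * (1 - t) ^ (β - 1)) volume 0 1 := by
  have hcomplex : IntervalIntegrable
      (fun t : ℝ ↦ (t : ℂ) ^ ((α : ℂ) - 1) * (1 - (t : ℂ)) ^ ((β : ℂ) - 1)) volume 0 1 :=
    Complex.betaIntegral_convergent (by simpa) (by simpa)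
  rw [intervalIntegrable_iff_integrableOn_Ioc_of_le zero_le_one] at hcomplex ⊢
  refine IntegrableOn.congr_fun hcomplex.re (fun t ⟨ht_pos, ht_le⟩ ↦ ?_) measurableSet_Ioc
  have hcast : (t : ℂ) ^ ((α : ℂ) - 1) * (1 - (t : ℂ)) ^ ((β : ℂ) - 1) =
      ((t ^ (α - 1) * (1 - t) ^ (β - 1) : ℝ) : ℂ) := by
    simp [Complex.ofReal_cpow ht_pos.le, Complex.ofReal_cpow (sub_nonneg.2 ht_le)]
  simp only [hcast, RCLike.re_to_complex, Complex.ofReal_re]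

variable {E : Type*} [NormedAddCommGroup E] [NormedSpace ℝ E] {w : ℝ → E}

theorem mecbf_functional_relation_general
    (hw : IntervalIntegrable (fun t ↦ (t ^ (α - 1) * (1 - t) ^ (β - 1)) • w t) volume 0 1) :
    (∫ t in (0 : ℝ)..1, (t ^ (α - 1) * (1 - t) ^ (β + 1 - 1)) • w t) +
        ∫ t in (0 : ℝ)..1, (t ^ (α + 1 - 1) * (1 - t) ^ (β - 1)) • w t =
      ∫ t in (0 : ℝ)..1, (t ^ (α - 1) * (1 - t) ^ (β - 1)) • w t := by
  set f : ℝ → E := fun t ↦ (t ^ (α - 1) * (1 - t) ^ (β - 1)) • w t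
  -- Only on the open interval are both bases nonzero, as `rpow_add_one` requires.
  have raise_right : ∫ t in (0 : ℝ)..1, (t ^ (α - 1) * (1 - t) ^ (β + 1 - 1)) • w t =
      ∫ t in (0 : ℝ)..1, (1 - t) • f t := by
    refine intervalIntegral.integral_congr_Ioo_of_le zero_le_one fun t ht ↦ ?_
    simp only [f, smul_smul]
    rw [add_sub_right_comm, rpow_add_one (sub_pos.2 ht.2).ne', ← mul_assoc, mul_comm]
  have raise_left : ∫ t in (0 : ℝ)..1, (t ^ (α + 1 - 1) * (1 - t) ^ (β - 1)) • w t =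
      ∫ t in (0 : ℝ)..1, t • f t := by
    refine intervalIntegral.integral_congr_Ioo_of_le zero_le_one fun t ht ↦ ?_
    simp only [f, smul_smul]
    rw [add_sub_right_comm, rpow_add_one ht.1.ne', mul_comm _ t, mul_assoc]
  rw [raise_right, raise_left, ← intervalIntegral.integral_add
    (hw.continuousOn_smul (by fun_prop)) (hw.continuousOn_smul (by fun_prop))]
  simp only [← add_smul, sub_add_cancel, one_smul]

end WeightedBeta

theorem mecbf_functional_relation (α β m : ℝ) (hα : 0 < α) (hβ : 0 < β) :
    mecbf α (β + 1) m + mecbf (α + 1) β m = mecbf α β m :=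
  mecbf_functional_relation_general <|
    (intervalIntegrable_rpow_mul_one_sub_rpow hα hβ).smul_continuousOn (by fun_prop)
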